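/- (Lovász (g,f)-factor theorem) Let G = (V, E) be a finite simple graph and let f, g : V → ℕ be functions such that g(x) ≤ f(x) and g(x) ≡ f(x) (mod 2) for all x ∈ V. Then G has a spanning subgraph F with g(x) ≤ deg_F(x) ≤ f(x) and deg_F(x) ≡ f(x) (mod 2) for all x ∈ V if and only if for all disjoint subsets S, T ⊆ V the quantity Σ_{x∈S} f(x) + Σ_{x∈T} (deg_G(x) − g(x)) − ε_G(S,T) − q(S,T) is nonnegative, where ε_G(S,T) is the number of edges of G with one endpoint in S and the other in T, and q(S,T) is the number of connected components C of G − (S ∪ T) such that Σ_{x∈V(C)} f(x) + ε_G(V(C), T) is odd. -/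

import Mathlib

/-- `ε_G(U, W)`: the number of edges of `G` with one endpoint in `U` and the
other endpoint in `W`. -/
noncomputable def edgesBetween {V : Type*} (G : SimpleGraph V) (U W : Set V) : ℕ :=
  Set.ncard {p : Sym2 V | p ∈ G.edgeSet ∧ ∃ u ∈ U, ∃ w ∈ W, p = s(u, w)}

/-- The set of vertices of `G` belonging to the connected component `c` of the
induced subgraph `G[R]`. -/
def componentVertexSet {V : Type*} (G : SimpleGraph V) (R : Set V)
    (c : (G.induce R).ConnectedComponent) : Set V :=
  {x : V | ∃ h : x ∈ R, (G.induce R).connectedComponentMk ⟨x, h⟩ = c}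

/-- `q(S, T)`: the number of connected components `C` of `G − (S ∪ T)` such
that `Σ_{x ∈ V(C)} f(x) + ε_G(V(C), T)` is odd. -/
noncomputable def lovaszQ {V : Type*} (G : SimpleGraph V) (f : V → ℕ)
    (S T : Finset V) : ℕ :=
  Set.ncard {c : (G.induce ((↑S ∪ ↑T : Set V)ᶜ)).ConnectedComponent |
    Odd ((∑ᶠ x ∈ componentVertexSet G ((↑S ∪ ↑T : Set V)ᶜ) c, f x) +
      edgesBetween G (componentVertexSet G ((↑S ∪ ↑T : Set V)ᶜ) c) ↑T)}


namespace LovaszAux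

open SimpleGraph

/-- A finite set with a fixed-point-free involution has even cardinality. -/
lemma even_ncard_of_involution {α : Type*} [Finite α] (s : Set α) (σ : α → α)
    (h1 : ∀ a ∈ s, σ a ∈ s) (h2 : ∀ a ∈ s, σ (σ a) = a) (h3 : ∀ a ∈ s, σ a ≠ a) :
    Even s.ncard := by
  classical
  have hf : s.Finite := Set.toFinite s
  rw [Set.ncard_eq_toFinset_card s hf]
  have := Finset.sum_involution (s := hf.toFinset) (f := fun _ => (1 : ZMod 2))
    (fun a _ => σ a) (fun a _ => by decide) (fun a ha _ => h3 a (by simpa using ha))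
    (fun a ha => by simpa using h1 a (by simpa using ha))
    (fun a ha => h2 a (by simpa using ha))
  simp only [Finset.sum_const, nsmul_eq_mul, mul_one] at this
  exact (ZMod.natCast_eq_zero_iff_even).1 this

section darts
variable {V : Type*} (G : SimpleGraph V)

instance dartFinite [Finite V] : Finite G.Dart :=
  Finite.of_injective _ (Dart.toProd_injective (G := G))

/-- Edges between disjoint sets counted by darts. -/
lemma edgesBetween_eq (U W : Set V) (h : Disjoint U W) :
    edgesBetween G U W = {d : G.Dart | d.fst ∈ U ∧ d.snd ∈ W}.ncard := by
  have hinj : Set.InjOn (Dart.edge (G := G)) {d : G.Dart | d.fst ∈ U ∧ d.snd ∈ W} := by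
    intro a ha b hb hab
    rcases (dart_edge_eq_iff a b).1 hab with h' | h'
    · exact h'
    · subst h'
      exact (Set.disjoint_left.1 h ha.1 hb.2).elim
  rw [← hinj.ncard_image, edgesBetween]
  congr 1
  ext p
  constructor
  · rintro ⟨hp, u, hu, w, hw, rfl⟩
    exact ⟨⟨(u, w), hp⟩, ⟨hu, hw⟩, rfl⟩
  · rintro ⟨d, ⟨h1, h2⟩, rfl⟩
    exact ⟨d.edge_mem, d.fst, h1, d.snd, h2, rfl⟩

/-- Degree sums counted by darts. -/
lemma sum_ncard_neighborSet [Finite V] (F : SimpleGraph V) (hF : F ≤ G) (A : Finset V) :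
    ∑ x ∈ A, (F.neighborSet x).ncard =
      {d : G.Dart | d.fst ∈ A ∧ F.Adj d.fst d.snd}.ncard := by
  classical
  have : Fintype G.Dart := Fintype.ofFinite _
  rw [Set.ncard_eq_toFinset_card',
    Finset.card_eq_sum_card_fiberwise (f := fun d : G.Dart => d.fst) (t := A)]
  · refine Finset.sum_congr rfl fun x hx => ?_
    rw [← Set.ncard_coe_finset]
    symm
    refine Set.ncard_congr (fun d _ => d.snd) ?_ ?_ ?_
    · rintro d hd
      simp at hd
      rw [← hd.2]; exact hd.1.2
    · rintro ⟨⟨a, b⟩, h⟩ ⟨⟨a', b'⟩, h'⟩ hd hd' hh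
      simp at hd hd' hh
      ext <;> simp [hd.2, hd'.2, hh]
    · intro b hb
      exact ⟨⟨(x, b), hF hb⟩, by simpa [hx] using hb, rfl⟩
  · intro d hd
    simp at hd
    exact hd.1

end darts

section comp
variable {V : Type*} (G : SimpleGraph V) (R : Set V)

lemma comp_sub (c : (G.induce R).ConnectedComponent) {x : V}
    (h : x ∈ componentVertexSet G R c) : x ∈ R := h.1

lemma comp_closed (c : (G.induce R).ConnectedComponent) {x y : V}
    (h : x ∈ componentVertexSet G R c) (hy : y ∈ R) (hxy : G.Adj x y) :
    y ∈ componentVertexSet G R c := by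
  obtain ⟨hx, rfl⟩ := h
  refine ⟨hy, ?_⟩
  rw [ConnectedComponent.eq]
  exact Adj.reachable (by simpa using hxy.symm)

lemma comp_conn (c : (G.induce R).ConnectedComponent) {x y : V}
    (h : x ∈ componentVertexSet G R c) (hy : y ∈ componentVertexSet G R c) :
    Relation.ReflTransGen (fun a b => a ∈ R ∧ b ∈ R ∧ G.Adj a b) x y := by
  obtain ⟨hx, rfl⟩ := h
  obtain ⟨hy, hc⟩ := hy
  rw [ConnectedComponent.eq, SimpleGraph.reachable_comm, reachable_iff_reflTransGen] at hc
  refine hc.lift (fun a : R => (a : V)) ?_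
  intro a b hab
  exact ⟨a.2, b.2, by simpa using hab⟩

end comp

/-- Necessity. -/
lemma necessity {V : Type*} [Fintype V]
    (G : SimpleGraph V) (f g : V → ℕ)
    (F : SimpleGraph V) (hF : F ≤ G)
    (hdeg : ∀ x : V, g x ≤ (F.neighborSet x).ncard ∧ (F.neighborSet x).ncard ≤ f x ∧
        (F.neighborSet x).ncard ≡ f x [MOD 2])
    (S T : Finset V) (hST : Disjoint S T) :
      (0 : ℤ) ≤ (∑ x ∈ S, (f x : ℤ))
        + (∑ x ∈ T, (((G.neighborSet x).ncard : ℤ) - (g x : ℤ)))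
        - (edgesBetween G ↑S ↑T : ℤ) - (lovaszQ G f S T : ℤ) := by
  classical
  set R : Set V := (↑S ∪ ↑T : Set V)ᶜ with hR
  have hSTs : Disjoint (S : Set V) (T : Set V) := by exact_mod_cast hST
  -- the four families of darts
  set XS : Set G.Dart := {d | d.fst ∈ S ∧ F.Adj d.fst d.snd} with hXS
  set XT : Set G.Dart := {d | d.fst ∈ T ∧ ¬ F.Adj d.fst d.snd} with hXT
  have e1 : ∑ x ∈ S, (F.neighborSet x).ncard = XS.ncard := sum_ncard_neighborSet G F hF S
  have e2 : ∑ x ∈ T, (F.neighborSet x).ncard + XT.ncard = ∑ x ∈ T, (G.neighborSet x).ncard := by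
    rw [sum_ncard_neighborSet G F hF, sum_ncard_neighborSet G G le_rfl,
      ← Set.ncard_union_eq]
    · congr 1
      ext d
      have := d.adj
      simp [hXT]; tauto
    · rw [Set.disjoint_left]; rintro d h1 h2; exact h2.2 h1.2
  have e3 : edgesBetween G ↑S ↑T ≤ ((XS ∪ XT) ∩ {d | d.snd ∉ R}).ncard := by
    rw [edgesBetween_eq G _ _ hSTs]
    refine Set.ncard_le_ncard_of_injOn
      (fun d => if F.Adj d.fst d.snd then d else d.symm) ?_ ?_
    · rintro d ⟨h1, h2⟩
      simp only [Finset.mem_coe] at h1 h2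
      split_ifs with h
      · refine ⟨Or.inl ⟨h1, h⟩, ?_⟩
        simp [hR, h2]
      · refine ⟨Or.inr ⟨h2, fun h' => h h'.symm⟩, ?_⟩
        simp [hR, h1]
    · rintro a ⟨ha1, ha2⟩ b ⟨hb1, hb2⟩ hab
      dsimp only at hab
      split_ifs at hab with h h' h'
      · exact hab
      · subst hab; exact (Set.disjoint_left.1 hSTs ha1 hb2).elim
      · subst hab; exact (Set.disjoint_left.1 hSTs hb1 ha2).elim
      · exact Dart.symm_involutive.injective hab
  have e4 : lovaszQ G f S T ≤ ((XS ∪ XT) ∩ {d | d.snd ∈ R}).ncard := by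
    have key : ∀ c : (G.induce R).ConnectedComponent,
        Odd ((∑ᶠ x ∈ componentVertexSet G R c, f x) +
          edgesBetween G (componentVertexSet G R c) ↑T) →
        ∃ d ∈ XS ∪ XT, d.snd ∈ componentVertexSet G R c := by
      intro c hc
      by_contra hno
      push Not at hno
      set U := componentVertexSet G R c with hU
      have hUT : Disjoint U (T : Set V) := by
        rw [Set.disjoint_left]; intro x hx hx'
        have := comp_sub G R c hx
        simp [hR] at this; exact this.2 hx'
      rw [edgesBetween_eq G _ _ hUT, finsum_mem_eq_toFinset_sum] at hc
      -- the darts of F leaving U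
      have hfs : (∑ x ∈ U.toFinset, f x) ≡ {d : G.Dart | d.fst ∈ U ∧ F.Adj d.fst d.snd}.ncard
          [MOD 2] := by
        have : {d : G.Dart | d.fst ∈ U ∧ F.Adj d.fst d.snd} =
          {d : G.Dart | d.fst ∈ U.toFinset ∧ F.Adj d.fst d.snd} := by simp
        rw [this, ← sum_ncard_neighborSet G F hF]
        exact (Nat.ModEq.sum (fun x _ => (hdeg x).2.2)).symm
      have hsplit : {d : G.Dart | d.fst ∈ U ∧ F.Adj d.fst d.snd} =
          {d : G.Dart | d.fst ∈ U ∧ d.snd ∈ U ∧ F.Adj d.fst d.snd} ∪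
          {d : G.Dart | d.fst ∈ U ∧ d.snd ∈ (T : Set V)} := by
        ext d
        constructor
        · rintro ⟨h1, h2⟩
          by_cases hT : d.snd ∈ T
          · exact Or.inr ⟨h1, hT⟩
          · by_cases hS : d.snd ∈ S
            · exact (hno d.symm (Or.inl ⟨hS, h2.symm⟩) h1).elim
            · exact Or.inl ⟨h1, comp_closed G R c h1 (by simp [hR, hS, hT]) d.adj, h2⟩
        · rintro (⟨h1, h2, h3⟩ | ⟨h1, h2⟩)
          · exact ⟨h1, h3⟩
          · refine ⟨h1, ?_⟩
            by_contra h3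
            exact hno d.symm (Or.inr ⟨h2, fun h => h3 h.symm⟩) h1
      have hev : Even {d : G.Dart | d.fst ∈ U ∧ d.snd ∈ U ∧ F.Adj d.fst d.snd}.ncard :=
        even_ncard_of_involution _ Dart.symm
          (fun d hd => ⟨hd.2.1, hd.1, hd.2.2.symm⟩) (fun d _ => d.symm_symm)
          (fun d _ => d.symm_ne)
      rw [hsplit, Set.ncard_union_eq (by
        rw [Set.disjoint_left]; rintro d h1 h2
        exact Set.disjoint_left.1 hUT h1.2.1 h2.2)] at hfs
      obtain ⟨a, ha⟩ := hev
      obtain ⟨b, hb⟩ := hc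
      unfold Nat.ModEq at hfs
      omega
    by_cases hne : Nonempty G.Dart
    swap
    · have : lovaszQ G f S T = 0 := by
        rw [lovaszQ, Set.ncard_eq_zero]
        refine Set.eq_empty_iff_forall_notMem.2 fun c hc => ?_
        obtain ⟨d, -, -⟩ := key c hc
        exact hne ⟨d⟩
      omega
    choose! D hD1 hD2 using key
    refine Set.ncard_le_ncard_of_injOn D ?_ ?_
    · intro c hc
      exact ⟨hD1 c hc, comp_sub G R c (hD2 c hc)⟩
    · intro c hc c' hc' h
      obtain ⟨h1, h2⟩ := hD2 c hc
      obtain ⟨h1', h2'⟩ := hD2 c' hc'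
      rw [← h2, ← h2']
      congr 1
      exact Subtype.ext (congrArg (fun d : G.Dart => d.snd) h)
  have e5 : ((XS ∪ XT) ∩ {d | d.snd ∉ R}).ncard + ((XS ∪ XT) ∩ {d | d.snd ∈ R}).ncard
      ≤ XS.ncard + XT.ncard := by
    rw [← Set.ncard_union_eq]
    · refine le_trans (Set.ncard_le_ncard ?_) (Set.ncard_union_le XS XT)
      intro d hd; rcases hd with hd | hd <;> exact hd.1
    · rw [Set.disjoint_left]; rintro d h1 h2; exact h1.2 h2.2
  have e6 : ∑ x ∈ S, (F.neighborSet x).ncard ≤ ∑ x ∈ S, f x :=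
    Finset.sum_le_sum fun x _ => (hdeg x).2.1
  have e7 : ∑ x ∈ T, g x ≤ ∑ x ∈ T, (F.neighborSet x).ncard :=
    Finset.sum_le_sum fun x _ => (hdeg x).1
  rw [Finset.sum_sub_distrib]
  push_cast [← Nat.cast_sum]
  omega

section tutte
variable {W : Type*} (H : SimpleGraph W)

/-- Connectivity in `H - u`. -/
def Conn (u : Set W) : W → W → Prop :=
  Relation.ReflTransGen (fun x y => x ∉ u ∧ y ∉ u ∧ H.Adj x y)

/-- The class of `a` in `H - u`. -/
def cls (u : Set W) (a : W) : Set W := {b | Conn H u a b}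

/-- The odd components of `H - u`. -/
def oddC (u : Set W) : Set (Set W) := {C | (∃ a, a ∉ u ∧ C = cls H u a) ∧ Odd C.ncard}

variable {H}

lemma Conn.symm {u : Set W} {a b : W} (h : Conn H u a b) : Conn H u b a := by
  induction h with
  | refl => exact Relation.ReflTransGen.refl
  | tail _ h ih => exact Relation.ReflTransGen.head ⟨h.2.1, h.1, h.2.2.symm⟩ ih

lemma Conn.trans {u : Set W} {a b c : W} (h : Conn H u a b) (h' : Conn H u b c) :
    Conn H u a c := Relation.ReflTransGen.trans h h'

lemma Conn.of_adj {u : Set W} {a b : W} (ha : a ∉ u) (hb : b ∉ u) (h : H.Adj a b) :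
    Conn H u a b := Relation.ReflTransGen.single ⟨ha, hb, h⟩

lemma cls_self (u : Set W) (a : W) : a ∈ cls H u a := Relation.ReflTransGen.refl

lemma cls_eq {u : Set W} {a b : W} (h : Conn H u a b) : cls H u a = cls H u b := by
  ext c
  exact ⟨fun h' => h.symm.trans h', fun h' => h.trans h'⟩

lemma cls_eq_of_mem {u : Set W} {a b : W} (h : b ∈ cls H u a) : cls H u a = cls H u b :=
  cls_eq h

lemma cls_subset {u : Set W} {a : W} (N : Set W) (haN : a ∈ N)
    (hN : ∀ x ∈ N, ∀ y, y ∉ u → H.Adj x y → y ∈ N) : cls H u a ⊆ N := by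
  intro b hb
  induction hb with
  | refl => exact haN
  | tail _ h ih => exact hN _ ih _ h.2.1 h.2.2

lemma cls_notMem {u : Set W} {a b : W} (ha : a ∉ u) (h : b ∈ cls H u a) : b ∉ u :=
  cls_subset uᶜ ha (fun _ _ _ hy _ => hy) h

lemma reach_iff (u : Set W) (a b : ((⊤ : H.Subgraph).deleteVerts u).verts) :
    ((⊤ : H.Subgraph).deleteVerts u).coe.Reachable a b ↔ Conn H u a b := by
  rw [reachable_iff_reflTransGen]
  constructor
  · intro h
    refine h.lift (fun x : ((⊤ : H.Subgraph).deleteVerts u).verts => (x : W)) ?_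
    rintro x y hxy
    simp at hxy
    exact ⟨hxy.1, hxy.2.1, hxy.2.2⟩
  · intro h
    obtain ⟨a, ha⟩ := a
    obtain ⟨b, hb⟩ := b
    change Conn H u a b at h
    induction h with
    | refl => exact Relation.ReflTransGen.refl
    | @tail x y _ h ih =>
      have hx : x ∈ ((⊤ : H.Subgraph).deleteVerts u).verts := by simpa using h.1
      refine (ih hx).tail ?_
      simpa using h

lemma supp_eq (u : Set W) (a : ((⊤ : H.Subgraph).deleteVerts u).verts) :
    Subtype.val '' (((⊤ : H.Subgraph).deleteVerts u).coe.connectedComponentMk a).supp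
      = cls H u a := by
  ext b
  constructor
  · rintro ⟨b, hb, rfl⟩
    simp only [ConnectedComponent.mem_supp_iff, ConnectedComponent.eq] at hb
    exact ((reach_iff u b a).1 hb).symm
  · intro hb
    have ha : (a : W) ∉ u := by simpa using a.2
    have hbu := cls_notMem ha hb
    refine ⟨⟨b, by simpa using hbu⟩, ?_, rfl⟩
    simp only [ConnectedComponent.mem_supp_iff, ConnectedComponent.eq]
    exact (reach_iff u _ _).2 (Conn.symm hb)

lemma ncard_oddC (u : Set W) :
    ((⊤ : H.Subgraph).deleteVerts u).coe.oddComponents.ncard = (oddC H u).ncard := by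
  refine Set.ncard_congr (fun c _ => Subtype.val '' c.supp) ?_ ?_ ?_
  · intro c hc
    induction c using ConnectedComponent.ind with | _ a
    refine ⟨⟨a, by simpa using a.2, supp_eq u a⟩, ?_⟩
    rw [Set.ncard_image_of_injective _ Subtype.val_injective]
    exact hc
  · intro c c' _ _ h
    exact ConnectedComponent.supp_injective (Subtype.val_injective.image_injective h)
  · rintro C ⟨⟨a, ha, rfl⟩, hodd⟩
    have ha' : a ∈ ((⊤ : H.Subgraph).deleteVerts u).verts := by simpa using ha
    refine ⟨((⊤ : H.Subgraph).deleteVerts u).coe.connectedComponentMk ⟨a, ha'⟩, ?_, supp_eq u ⟨a, ha'⟩⟩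
    rw [← supp_eq u ⟨a, ha'⟩, Set.ncard_image_of_injective _ Subtype.val_injective] at hodd
    exact hodd

/-- A form of Tutte's theorem with a minimal violator. -/
lemma tutte_min [Finite W]
    (hno : ∀ M : H.Subgraph, ¬ M.IsPerfectMatching) :
    ∃ u : Set W, u.ncard < (oddC H u).ncard ∧
      ∀ x ∈ u, ∀ C₁ C₂ : Set W, ∃ y, y ∉ u ∧ H.Adj x y ∧ cls H u y ≠ C₁ ∧ cls H u y ≠ C₂ := by
  classical
  rcases Nat.even_or_odd (Nat.card W) with hev | hodd
  swap
  · refine ⟨∅, ?_, fun x hx => hx.elim⟩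
    rw [← ncard_oddC, Set.ncard_empty]
    exact ((odd_ncard_oddComponents _).mpr <| by simpa using hodd).pos
  have hex : ∃ n, ∃ u : Set W, u.ncard = n ∧ u.ncard < (oddC H u).ncard := by
    by_contra hcon
    push Not at hcon
    obtain ⟨M, hM⟩ := tutte.2 (fun u (hu : H.IsTutteViolator u) => by
      unfold IsTutteViolator at hu
      rw [ncard_oddC] at hu
      exact absurd hu (not_lt.2 (hcon _ u rfl)))
    exact hno M hM
  obtain ⟨u, hun, hu⟩ := Nat.find_spec hex
  have hmin := fun m (hm : m < Nat.find hex) => Nat.find_min hex hm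
  rw [← hun] at hmin
  refine ⟨u, hu, ?_⟩
  intro x hx C₁ C₂
  by_contra hcon
  push Not at hcon
  have hlt : (u \ {x}).ncard < u.ncard := Set.ncard_sdiff_singleton_lt_of_mem hx
  have hle := hmin _ hlt
  push Not at hle
  have hle := hle _ rfl
  -- parity
  have hpar : Odd (oddC H u).ncard ↔ Odd u.ncard := by
    rw [← ncard_oddC, odd_ncard_oddComponents]
    have h1 : Nat.card ((⊤ : H.Subgraph).deleteVerts u).verts = uᶜ.ncard := by
      rw [Nat.card_coe_set_eq]; congr 1; ext; simp
    have h2 := Set.ncard_add_ncard_compl u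
    rw [h1]
    rw [← h2] at hev
    rw [Nat.even_add] at hev
    rw [← Nat.not_even_iff_odd, ← Nat.not_even_iff_odd, hev]
  have hsub : oddC H u \ {C₁, C₂} ⊆ oddC H (u \ {x}) := by
    rintro C ⟨⟨⟨a, ha, rfl⟩, hodd⟩, hC⟩
    simp only [Set.mem_insert_iff, Set.mem_singleton_iff, not_or] at hC
    refine ⟨⟨a, fun h => ha h.1, ?_⟩, hodd⟩
    apply Set.Subset.antisymm
    · intro b hb
      refine Relation.ReflTransGen.mono ?_ _ _ hb
      rintro y z ⟨h1, h2, h3⟩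
      exact ⟨fun h => h1 h.1, fun h => h2 h.1, h3⟩
    · refine cls_subset _ (cls_self u a) ?_
      intro y hy z hz hyz
      have hyu := cls_notMem ha hy
      by_cases hzx : z = x
      · subst hzx
        exfalso
        have := hcon y hyu hyz.symm
        rw [← cls_eq_of_mem hy] at this
        exact hC.2 (this hC.1)
      · have hzu : z ∉ u := fun h => hz ⟨h, hzx⟩
        exact Conn.trans hy (Conn.of_adj hyu hzu hyz)
  have h3 : (oddC H u).ncard ≤ (oddC H u \ {C₁, C₂}).ncard + ({C₁, C₂} : Set (Set W)).ncard :=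
    Set.ncard_le_ncard_sdiff_add_ncard _ _
  have h4 := Set.ncard_le_ncard hsub
  have h5 : ({C₁, C₂} : Set (Set W)).ncard ≤ 2 := by
    refine (Set.ncard_insert_le _ _).trans ?_
    simp
  have h6 : (oddC H u).ncard ≠ u.ncard + 1 := by
    intro h
    rw [h, Nat.odd_add_one] at hpar
    tauto
  omega

end tutte

section gadget
variable {V : Type*} (G : SimpleGraph V) (f g : V → ℕ)

/-- Vertices of the gadget: slots and darts. -/
abbrev GW := (Σ v : V, Fin (f v)) ⊕ G.Dart

/-- Adjacency of the gadget. -/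
def gadj : GW G f → GW G f → Prop
  | .inl s, .inl t => s.1 = t.1 ∧ (s.2 : ℕ) ≠ t.2 ∧ g s.1 ≤ s.2 ∧ g t.1 ≤ t.2
  | .inl s, .inr d => d.fst = s.1
  | .inr d, .inl s => d.fst = s.1
  | .inr d, .inr e => e = d.symm

/-- The gadget graph. -/
def gadget : SimpleGraph (GW G f) where
  Adj := gadj G f g
  symm := ⟨by
    rintro (s | d) (t | e) h
    · exact ⟨h.1.symm, h.2.1.symm, h.2.2.2, h.2.2.1⟩
    · exact h
    · exact h
    · simp only [gadj] at h ⊢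
      rw [h, Dart.symm_symm]⟩
  loopless := ⟨by
    rintro (s | d) h
    · exact h.2.1 rfl
    · exact d.symm_ne h.symm⟩

/-- A perfect matching of the gadget gives a factor. -/
lemma factor_of_matching [Fintype V] (hpar : ∀ x, g x ≡ f x [MOD 2]) (hgf : ∀ x, g x ≤ f x)
    (M : (gadget G f g).Subgraph) (hM : M.IsPerfectMatching) :
    ∃ F : SimpleGraph V, F ≤ G ∧
      ∀ x : V, g x ≤ (F.neighborSet x).ncard ∧ (F.neighborSet x).ncard ≤ f x ∧
        (F.neighborSet x).ncard ≡ f x [MOD 2] := by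
  classical
  rw [Subgraph.isPerfectMatching_iff] at hM
  choose p hp1 hp2 using hM
  dsimp only at hp2
  have hpp : ∀ w, p (p w) = w := fun w => (hp2 _ _ (hp1 w).symm).symm
  have hadj : ∀ w, gadj G f g w (p w) := fun w => M.adj_sub (hp1 w)
  let F : SimpleGraph V :=
    { Adj := fun x y => ∃ h : G.Adj x y, p (.inr ⟨(x, y), h⟩) ≠ .inr ⟨(y, x), h.symm⟩
      symm := ⟨by
        rintro x y ⟨h, hn⟩
        refine ⟨h.symm, fun h' => hn ?_⟩
        rw [← h', hpp]⟩
      loopless := ⟨fun x h => h.1.ne rfl⟩ }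
  refine ⟨F, fun x y h => h.1, fun x => ?_⟩
  -- slots at `x` matched to darts / to slots
  set A : Set (Fin (f x)) := {i | ∃ d, p (.inl ⟨x, i⟩) = .inr d} with hA
  have hdeg : (F.neighborSet x).ncard = A.ncard := by
    symm
    refine Set.ncard_congr (fun i _ => match p (.inl ⟨x, i⟩) with | .inl _ => x | .inr d => d.snd)
      ?_ ?_ ?_
    · rintro i ⟨d, hd⟩
      simp only [hd]
      have h1 := hadj (.inl ⟨x, i⟩)
      rw [hd] at h1
      simp only [gadj] at h1
      obtain ⟨⟨a, b⟩, hab⟩ := d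
      simp only at h1
      subst h1
      refine ⟨hab, ?_⟩
      rw [← hd, hpp]
      simp
    · rintro i j ⟨d, hd⟩ ⟨e, he⟩ hij
      simp only [hd, he] at hij
      have h1 := hadj (.inl ⟨x, i⟩)
      rw [hd] at h1
      simp only [gadj] at h1
      have h2 := hadj (.inl ⟨x, j⟩)
      rw [he] at h2
      simp only [gadj] at h2
      have : d = e := by
        ext
        · rw [h1, h2]
        · exact hij
      rw [← this, ← hd] at he
      have := congrArg p he
      rw [hpp, hpp] at this
      simpa using this.symm
    · rintro y ⟨h, hn⟩
      have h1 := hadj (.inr ⟨(x, y), h⟩)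
      rcases hq : p (.inr ⟨(x, y), h⟩) with ⟨v, i⟩ | d
      · rw [hq] at h1
        simp only [gadj] at h1
        subst h1
        have h2 := congrArg p hq
        rw [hpp] at h2
        exact ⟨i, ⟨_, h2.symm⟩, by rw [← h2]⟩
      · rw [hq] at h1
        simp only [gadj] at h1
        subst h1
        exact (hn hq).elim
  have hAc : ∀ i ∈ Aᶜ, ∃ j, p (.inl ⟨x, i⟩) = .inl ⟨x, j⟩ ∧ i ≠ j ∧ g x ≤ i ∧ g x ≤ j := by
    intro i hi
    have h1 := hadj (.inl ⟨x, i⟩)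
    rcases hq : p (.inl ⟨x, i⟩) with ⟨v, j⟩ | d
    · rw [hq] at h1
      simp only [gadj] at h1
      obtain ⟨h1, h2, h3, h4⟩ := h1
      subst h1
      exact ⟨j, rfl, fun h => h2 (by rw [h]), h3, h4⟩
    · exact (hi ⟨d, hq⟩).elim
  have hcard := Set.ncard_add_ncard_compl A
  rw [Nat.card_eq_fintype_card, Fintype.card_fin] at hcard
  have hle : Aᶜ.ncard ≤ f x - g x := by
    have : Aᶜ.ncard ≤ (Finset.Ico (g x) (f x) : Set ℕ).ncard := by
      refine Set.ncard_le_ncard_of_injOn (fun i : Fin (f x) => (i : ℕ)) ?_ ?_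
      · intro i hi
        obtain ⟨j, -, -, h, -⟩ := hAc i hi
        simpa using h
      · intro i _ j _ h
        exact Fin.ext h
    simpa using this
  have hev : Even Aᶜ.ncard := by
    choose! σ hσ using hAc
    have hmem : ∀ i ∈ Aᶜ, σ i ∈ Aᶜ := by
      rintro i hi ⟨d, hd⟩
      have := congrArg p (hσ i hi).1
      rw [hpp, hd] at this
      cases this
    refine even_ncard_of_involution _ σ hmem ?_ ?_
    · intro i hi
      have h1 := congrArg p (hσ i hi).1
      rw [hpp, (hσ _ (hmem i hi)).1] at h1
      simpa using h1.symm
    · intro i hi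
      exact (hσ i hi).2.1.symm
  have := hgf x
  have hpx := hpar x
  obtain ⟨k, hk⟩ := hev
  unfold Nat.ModEq at *
  rw [hdeg]
  omega

end gadget

section suff
variable {V : Type*} (G : SimpleGraph V) (f g : V → ℕ)

lemma ncard_slots (A : Finset V) :
    {s : Σ v : V, Fin (f v) | s.1 ∈ A}.ncard = ∑ x ∈ A, f x := by
  classical
  have : {s : Σ v : V, Fin (f v) | s.1 ∈ A} = (A.sigma (fun v => (Finset.univ : Finset (Fin (f v))))
      : Finset (Σ v : V, Fin (f v))) := by
    ext s; simp
  rw [this, Set.ncard_coe_finset, Finset.card_sigma]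
  simp

lemma ncard_slots_le (A : Finset V) :
    {s : Σ v : V, Fin (f v) | s.1 ∈ A ∧ (s.2 : ℕ) < g s.1}.ncard ≤ ∑ x ∈ A, g x := by
  classical
  have h : {s : Σ v : V, Fin (f v) | s.1 ∈ A ∧ (s.2 : ℕ) < g s.1}.ncard ≤
      ((A.sigma (fun v => Finset.range (g v)) : Finset (Σ _ : V, ℕ)) : Set (Σ _ : V, ℕ)).ncard := by
    refine Set.ncard_le_ncard_of_injOn (fun s => ⟨s.1, (s.2 : ℕ)⟩) ?_ ?_
    · rintro s hs
      simpa using hs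
    · rintro ⟨v, i⟩ _ ⟨w, j⟩ _ h
      simp only [Sigma.mk.injEq, heq_eq_eq] at h
      obtain ⟨rfl, h⟩ := h
      rw [Fin.ext h]
  rw [Set.ncard_coe_finset, Finset.card_sigma] at h
  simpa using h

lemma sufficiency [Fintype V] (hgf : ∀ x, g x ≤ f x) (hpar : ∀ x, g x ≡ f x [MOD 2])
    (hcond : ∀ S T : Finset V, Disjoint S T →
      (0 : ℤ) ≤ (∑ x ∈ S, (f x : ℤ))
        + (∑ x ∈ T, (((G.neighborSet x).ncard : ℤ) - (g x : ℤ)))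
        - (edgesBetween G ↑S ↑T : ℤ) - (lovaszQ G f S T : ℤ))
    (hno : ∀ M : (gadget G f g).Subgraph, ¬ M.IsPerfectMatching) : False := by
  classical
  obtain ⟨u, hu, hmin⟩ := tutte_min hno
  set H := gadget G f g with hH
  have adj_ll : ∀ s t, H.Adj (.inl s) (.inl t) ↔
    (s.1 = t.1 ∧ (s.2 : ℕ) ≠ t.2 ∧ g s.1 ≤ s.2 ∧ g t.1 ≤ t.2) := fun _ _ => Iff.rfl
  have adj_lr : ∀ s d, H.Adj (.inl s) (.inr d) ↔ d.fst = s.1 := fun _ _ => Iff.rfl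
  have adj_rl : ∀ s d, H.Adj (.inr d) (.inl s) ↔ d.fst = s.1 := fun _ _ => Iff.rfl
  have adj_rr : ∀ d e, H.Adj (.inr d) (.inr e) ↔ e = d.symm := fun _ _ => Iff.rfl
  have fA : ∀ d : G.Dart, (.inr d : GW G f) ∈ u →
      (∀ e : G.Dart, e.fst = d.fst → (.inr e : GW G f) ∈ u) ∧
      ∃ i, (.inl ⟨d.fst, i⟩ : GW G f) ∉ u := by
    intro d hd
    obtain ⟨y, hyu, hdy, hy, -⟩ := hmin _ hd (cls H u (.inr d.symm)) (cls H u (.inr d.symm))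
    obtain ⟨z, hzu, hdz, hz, hzy⟩ := hmin _ hd (cls H u (.inr d.symm)) (cls H u y)
    rcases y with ⟨v, i⟩ | y
    swap
    · rw [adj_rr] at hdy; subst hdy; exact (hy rfl).elim
    rcases z with ⟨w, j⟩ | z
    swap
    · rw [adj_rr] at hdz; subst hdz; exact (hz rfl).elim
    rw [adj_rl] at hdy hdz
    simp only at hdy hdz
    subst hdy
    subst hdz
    refine ⟨fun e he => ?_, i, hyu⟩
    by_contra heu
    apply hzy
    apply cls_eq
    exact (Conn.of_adj hzu heu ((adj_lr _ _).2 he)).trans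
      (Conn.of_adj heu hyu ((adj_rl _ _).2 he))
  have fB : ∀ (v : V) (i : Fin (f v)), (.inl ⟨v, i⟩ : GW G f) ∈ u →
      (∃ d : G.Dart, d.fst = v ∧ (.inr d : GW G f) ∉ u) ∧
      ∀ j, (.inl ⟨v, j⟩ : GW G f) ∈ u := by
    intro v i hi
    have hC : ∃ C : Set (GW G f), ∀ j : Fin (f v), g v ≤ j → (.inl ⟨v, j⟩ : GW G f) ∉ u →
        cls H u (.inl ⟨v, j⟩) = C := by
      by_cases hk : ∃ k : Fin (f v), g v ≤ k ∧ (.inl ⟨v, k⟩ : GW G f) ∉ u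
      · obtain ⟨k, hk1, hk2⟩ := hk
        refine ⟨cls H u (.inl ⟨v, k⟩), fun j hj1 hj2 => ?_⟩
        by_cases hjk : j = k
        · rw [hjk]
        · exact cls_eq (Conn.of_adj hj2 hk2
            ((adj_ll _ _).2 ⟨rfl, fun h => hjk (Fin.ext h), hj1, hk1⟩))
      · push Not at hk
        exact ⟨∅, fun j hj1 hj2 => (hj2 (hk j hj1)).elim⟩
    obtain ⟨C, hC⟩ := hC
    have key : ∀ D : Set (GW G f), ∃ d : G.Dart, d.fst = v ∧ (.inr d : GW G f) ∉ u ∧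
        cls H u (.inr d) ≠ D := by
      intro D
      obtain ⟨y, hyu, hdy, hy, hyD⟩ := hmin _ hi C D
      rcases y with ⟨w, j⟩ | y
      · rw [adj_ll] at hdy
        obtain ⟨h1, h2, h3, h4⟩ := hdy
        simp only at h1
        subst h1
        exact (hy (hC j h4 hyu)).elim
      · exact ⟨y, hdy, hyu, hyD⟩
    refine ⟨?_, fun j => ?_⟩
    · obtain ⟨d, h1, h2, -⟩ := key ∅
      exact ⟨d, h1, h2⟩
    · by_contra hj
      obtain ⟨d, h1, h2, h3⟩ := key (cls H u (.inl ⟨v, j⟩))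
      exact h3 (cls_eq (Conn.of_adj h2 hj ((adj_rl _ _).2 h1)))
  set T : Finset V := Finset.univ.filter
    (fun v => ∀ d : G.Dart, d.fst = v → (.inr d : GW G f) ∈ u) with hT
  set S : Finset V := Finset.univ.filter
    (fun v => v ∉ T ∧ ∀ i, (.inl ⟨v, i⟩ : GW G f) ∈ u) with hS
  have hST : Disjoint S T := by
    rw [Finset.disjoint_left]; intro v hv
    exact (Finset.mem_filter.1 hv).2.1
  have hSTs : Disjoint (S : Set V) (T : Set V) := by exact_mod_cast hST
  have T1 : ∀ d : G.Dart, d.fst ∈ T → (.inr d : GW G f) ∈ u := by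
    intro d hd
    exact (Finset.mem_filter.1 hd).2 d rfl
  have T2 : ∀ v ∈ T, ∀ i, (.inl ⟨v, i⟩ : GW G f) ∉ u := by
    intro v hv i hi
    obtain ⟨⟨d, rfl, hd⟩, -⟩ := fB v i hi
    exact hd (T1 d hv)
  have nT : ∀ d : G.Dart, d.fst ∉ T → (.inr d : GW G f) ∉ u := by
    intro d hd hdu
    exact hd (Finset.mem_filter.2 ⟨Finset.mem_univ _, (fA d hdu).1⟩)
  have S1 : ∀ v ∈ S, ∀ i, (.inl ⟨v, i⟩ : GW G f) ∈ u := by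
    intro v hv
    exact (Finset.mem_filter.1 hv).2.2
  have N1 : ∀ v, v ∉ S → v ∉ T → ∀ i, (.inl ⟨v, i⟩ : GW G f) ∉ u := by
    intro v hvS hvT i hi
    exact hvS (Finset.mem_filter.2 ⟨Finset.mem_univ _, hvT, (fB v i hi).2⟩)
  have N2 : ∀ v, v ∉ S → v ∉ T → ∃ i, (.inl ⟨v, i⟩ : GW G f) ∉ u := by
    intro v hvS hvT
    by_contra hcon
    push Not at hcon
    exact hvS (Finset.mem_filter.2 ⟨Finset.mem_univ _, hvT, hcon⟩)
  -- size of `u`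
  have hcu : ∑ x ∈ S, f x + ∑ x ∈ T, (G.neighborSet x).ncard ≤ u.ncard := by
    rw [← ncard_slots, sum_ncard_neighborSet G G le_rfl,
      ← Set.ncard_image_of_injective _ (Sum.inl_injective (β := G.Dart)),
      ← Set.ncard_image_of_injective {d : G.Dart | _}
        (Sum.inr_injective (α := Σ v : V, Fin (f v))),
      ← Set.ncard_union_eq]
    · refine Set.ncard_le_ncard ?_ (Set.toFinite _)
      rintro w (⟨⟨v, i⟩, hs, rfl⟩ | ⟨d, hd, rfl⟩)
      · exact S1 v hs i
      · exact T1 d hd.1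
    · rw [Set.disjoint_left]
      rintro w ⟨s, -, rfl⟩ ⟨d, -, h⟩
      cases h
  set R : Set V := (↑S ∪ ↑T : Set V)ᶜ with hR
  have memR : ∀ v, v ∈ R ↔ v ∉ S ∧ v ∉ T := by intro v; simp [hR]
  let Q : Set (G.induce R).ConnectedComponent :=
    {c | Odd ((∑ᶠ x ∈ componentVertexSet G R c, f x) +
      edgesBetween G (componentVertexSet G R c) ↑T)}
  have hQ : lovaszQ G f S T = Q.ncard := rfl
  let DN : Set V → Set G.Dart := fun U => {d | d.fst ∈ U ∨ (d.fst ∈ S ∧ d.snd ∈ U)}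
  let N : (G.induce R).ConnectedComponent → Set (GW G f) := fun c =>
    Sum.inl '' {s | s.1 ∈ componentVertexSet G R c} ∪ Sum.inr '' DN (componentVertexSet G R c)
  have hNcard : ∀ c, Odd (N c).ncard → c ∈ Q := by
    intro c hc
    change Odd _
    set U := componentVertexSet G R c with hU
    have hUT : Disjoint U (T : Set V) := by
      rw [Set.disjoint_left]; intro x hx hx'
      exact ((memR x).1 (comp_sub G R c hx)).2 hx'
    rw [edgesBetween_eq G _ _ hUT, finsum_mem_eq_toFinset_sum, ← ncard_slots]
    have e1 : (N c).ncard = {s : Σ v : V, Fin (f v) | s.1 ∈ U}.ncard + (DN U).ncard := by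
      rw [← Set.ncard_image_of_injective {s : Σ v : V, Fin (f v) | s.1 ∈ U}
          (Sum.inl_injective (β := G.Dart)),
        ← Set.ncard_image_of_injective (DN U) (Sum.inr_injective (α := Σ v : V, Fin (f v))),
        ← Set.ncard_union_eq]
      rw [Set.disjoint_left]
      rintro w ⟨s, -, rfl⟩ ⟨d, -, h⟩
      cases h
    have e2 : {s : Σ v : V, Fin (f v) | s.1 ∈ U.toFinset} = {s : Σ v : V, Fin (f v) | s.1 ∈ U} := by
      simp
    have e3 : DN U = {d : G.Dart | d ∈ DN U ∧ d.symm ∈ DN U} ∪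
        {d : G.Dart | d.fst ∈ U ∧ d.snd ∈ (T : Set V)} := by
      ext d
      constructor
      · rintro (h | ⟨h1, h2⟩)
        · by_cases hdT : d.snd ∈ T
          · exact Or.inr ⟨h, hdT⟩
          · refine Or.inl ⟨Or.inl h, ?_⟩
            by_cases hdS : d.snd ∈ S
            · exact Or.inr ⟨hdS, h⟩
            · exact Or.inl (comp_closed G R c h ((memR _).2 ⟨hdS, hdT⟩) d.adj)
        · exact Or.inl ⟨Or.inr ⟨h1, h2⟩, Or.inl h2⟩
      · rintro (h | h)
        · exact h.1
        · exact Or.inl h.1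
    have e4 : Even {d : G.Dart | d ∈ DN U ∧ d.symm ∈ DN U}.ncard :=
      even_ncard_of_involution _ Dart.symm
        (fun d hd => ⟨hd.2, by rw [Dart.symm_symm]; exact hd.1⟩) (fun d _ => d.symm_symm)
        (fun d _ => d.symm_ne)
    have e5 : (DN U).ncard = {d : G.Dart | d ∈ DN U ∧ d.symm ∈ DN U}.ncard +
        {d : G.Dart | d.fst ∈ U ∧ d.snd ∈ (T : Set V)}.ncard := by
      rw [← Set.ncard_union_eq, ← e3]
      rw [Set.disjoint_left]
      rintro d ⟨-, h | h⟩ ⟨-, h2⟩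
      · exact Set.disjoint_left.1 hUT h h2
      · exact Set.disjoint_left.1 hSTs h.1 h2
    rw [e2]
    rw [e1, e5] at hc
    obtain ⟨a, ha⟩ := e4
    obtain ⟨b, hb⟩ := hc
    exact ⟨b - a, by omega⟩
  have hNcls : ∀ v (hv : v ∈ R) i, cls H u (.inl ⟨v, i⟩) =
      N ((G.induce R).connectedComponentMk ⟨v, hv⟩) := by
    intro v hv i
    set c := (G.induce R).connectedComponentMk ⟨v, hv⟩ with hc
    have hvc : v ∈ componentVertexSet G R c := ⟨hv, rfl⟩
    apply Set.Subset.antisymm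
    · apply cls_subset
      · exact Or.inl ⟨_, hvc, rfl⟩
      · rintro _ (⟨s, hs, rfl⟩ | ⟨d, hd, rfl⟩) (t | e) hy hxy
        · rw [adj_ll] at hxy
          refine Or.inl ⟨t, ?_, rfl⟩
          change t.1 ∈ componentVertexSet G R c
          rw [← hxy.1]; exact hs
        · rw [adj_lr] at hxy
          refine Or.inr ⟨e, Or.inl ?_, rfl⟩
          rw [hxy]; exact hs
        · rw [adj_rl] at hxy
          refine Or.inl ⟨t, ?_, rfl⟩
          change t.1 ∈ componentVertexSet G R c
          rw [← hxy]
          rcases hd with hd | hd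
          · exact hd
          · exact (hy (S1 t.1 (hxy ▸ hd.1) t.2)).elim
        · rw [adj_rr] at hxy
          subst hxy
          refine Or.inr ⟨_, ?_, rfl⟩
          rcases hd with hd | hd
          · by_cases hdT : d.snd ∈ T
            · exact (hy (T1 d.symm hdT)).elim
            · by_cases hdS : d.snd ∈ S
              · exact Or.inr ⟨hdS, hd⟩
              · exact Or.inl (comp_closed G R c hd ((memR _).2 ⟨hdS, hdT⟩) d.adj)
          · exact Or.inl hd.2
    · have hiu : (.inl ⟨v, i⟩ : GW G f) ∉ u := N1 v ((memR v).1 hv).1 ((memR v).1 hv).2 i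
      -- darts at a vertex are connected to slots at it
      have slotdart : ∀ (d : G.Dart), d.fst ∈ R → ∀ j,
          Conn H u (.inl ⟨d.fst, j⟩) (.inr d) := by
        intro d hd j
        have hd' := (memR _).1 hd
        exact Conn.of_adj (N1 _ hd'.1 hd'.2 j) (nT d hd'.2) ((adj_lr _ _).2 rfl)
      have dartdart : ∀ (d : G.Dart), d.fst ∉ T → d.snd ∉ T →
          Conn H u (.inr d) (.inr d.symm) := by
        intro d h1 h2
        exact Conn.of_adj (nT d h1) (nT d.symm h2) ((adj_rr _ _).2 rfl)
      have exdart : ∀ x ∈ R, ∃ d : G.Dart, d.fst = x := by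
        intro x hx
        by_contra hcon
        push Not at hcon
        exact ((memR x).1 hx).2 (Finset.mem_filter.2
          ⟨Finset.mem_univ _, fun d hd => (hcon d hd).elim⟩)
      have hslots : ∀ y, y ∈ componentVertexSet G R c → ∀ j,
          Conn H u (.inl ⟨v, i⟩) (.inl ⟨y, j⟩) := by
        intro y hy
        have hconn := comp_conn G R c hvc hy
        clear hy
        induction hconn with
        | refl =>
          intro j
          obtain ⟨d, rfl⟩ := exdart v hv
          exact (slotdart d hv i).trans (slotdart d hv j).symm
        | @tail x y _ hxy ih =>
          intro j
          obtain ⟨hx, hy, hadj⟩ := hxy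
          obtain ⟨k, hk⟩ := N2 x ((memR x).1 hx).1 ((memR x).1 hx).2
          exact (ih k).trans ((slotdart ⟨(x, y), hadj⟩ hx k).trans
            ((dartdart ⟨(x, y), hadj⟩ ((memR x).1 hx).2 ((memR y).1 hy).2).trans
              (slotdart ⟨(y, x), hadj.symm⟩ hy j).symm))
      have hdarts : ∀ d : G.Dart, d.fst ∈ componentVertexSet G R c →
          Conn H u (.inl ⟨v, i⟩) (.inr d) := by
        intro d hd
        have hdR := comp_sub G R c hd
        obtain ⟨k, hk⟩ := N2 _ ((memR _).1 hdR).1 ((memR _).1 hdR).2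
        exact (hslots _ hd k).trans (slotdart d hdR k)
      rintro _ (⟨⟨y, j⟩, hs, rfl⟩ | ⟨d, hd | hd, rfl⟩)
      · exact hslots y hs j
      · exact hdarts d hd
      · have hdT : d.fst ∉ T := fun h => Finset.disjoint_left.1 hST hd.1 h
        have hdT' : d.snd ∉ T := ((memR _).1 (comp_sub G R c hd.2)).2
        exact (hdarts d.symm hd.2).trans (dartdart d hdT hdT').symm
  let X : Set (GW G f) := Sum.inl '' {s | s.1 ∈ T ∧ (s.2 : ℕ) < g s.1} ∪
    Sum.inr '' {d : G.Dart | d.fst ∈ (S : Set V) ∧ d.snd ∈ (T : Set V)}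
  have hX : X.ncard ≤ ∑ x ∈ T, g x + edgesBetween G ↑S ↑T := by
    refine (Set.ncard_union_le _ _).trans ?_
    rw [edgesBetween_eq G _ _ hSTs]
    exact Nat.add_le_add ((Set.ncard_image_le).trans (ncard_slots_le f g T)) Set.ncard_image_le
  have hNeut : ∀ v, v ∉ S → v ∉ T → ∀ i, Odd (cls H u (.inl ⟨v, i⟩)).ncard →
      cls H u (.inl ⟨v, i⟩) ∈ N '' Q := by
    intro v h1 h2 i hodd
    have hv := (memR v).2 ⟨h1, h2⟩
    rw [hNcls v hv i] at hodd ⊢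
    exact ⟨_, hNcard _ hodd, rfl⟩
  have hDneut : ∀ d : G.Dart, d.fst ∉ S → d.fst ∉ T → Odd (cls H u (.inr d)).ncard →
      cls H u (.inr d) ∈ N '' Q := by
    intro d h1 h2 hodd
    obtain ⟨i, hi⟩ := N2 _ h1 h2
    have : cls H u (.inr d) = cls H u (.inl ⟨d.fst, i⟩) :=
      cls_eq (Conn.of_adj (nT d h2) hi ((adj_rl _ _).2 rfl))
    rw [this] at hodd ⊢
    exact hNeut _ h1 h2 i hodd
  have hcover : oddC H u ⊆ cls H u '' X ∪ N '' Q := by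
    rintro C ⟨⟨a, ha, rfl⟩, hodd⟩
    rcases a with ⟨v, i⟩ | d
    · by_cases hvT : v ∈ T
      · by_cases hi : (i : ℕ) < g v
        · exact Or.inl ⟨_, Or.inl ⟨⟨v, i⟩, ⟨hvT, hi⟩, rfl⟩, rfl⟩
        · exfalso
          push Not at hi
          have hcls : cls H u (.inl ⟨v, i⟩) =
              (fun j : Fin (f v) => (.inl ⟨v, j⟩ : GW G f)) '' {j | g v ≤ j} := by
            apply Set.Subset.antisymm
            · apply cls_subset
              · exact ⟨i, hi, rfl⟩
              · rintro _ ⟨j, hj, rfl⟩ (⟨w, k⟩ | e) hy hxy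
                · rw [adj_ll] at hxy
                  obtain ⟨h1, h2, h3, h4⟩ := hxy
                  simp only at h1
                  subst h1
                  exact ⟨k, h4, rfl⟩
                · rw [adj_lr] at hxy
                  simp only at hxy
                  subst hxy
                  exact (hy (T1 e hvT)).elim
            · rintro _ ⟨j, hj, rfl⟩
              by_cases hij : i = j
              · rw [← hij]; exact cls_self _ _
              · exact Conn.of_adj ha (T2 v hvT j)
                  ((adj_ll _ _).2 ⟨rfl, fun h => hij (Fin.ext h), hi, hj⟩)
          rw [hcls, Set.ncard_image_of_injective _ (by
            intro a b hab; simpa using hab)] at hodd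
          have hc : {j : Fin (f v) | g v ≤ j}.ncard = f v - g v := by
            rw [← Set.ncard_image_of_injective _ Fin.val_injective]
            have : (Fin.val '' {j : Fin (f v) | g v ≤ j}) =
                (Finset.Ico (g v) (f v) : Set ℕ) := by
              ext n
              simp only [Set.mem_image, Set.mem_ofPred_eq, Finset.coe_Ico, Set.mem_Ico]
              constructor
              · rintro ⟨j, hj, rfl⟩; exact ⟨hj, j.2⟩
              · rintro ⟨h1, h2⟩; exact ⟨⟨n, h2⟩, h1, rfl⟩
            rw [this, Set.ncard_coe_finset, Nat.card_Ico]
          rw [hc] at hodd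
          have h1 := hgf v
          have h2 := hpar v
          obtain ⟨k, hk⟩ := hodd
          unfold Nat.ModEq at h2
          omega
      · by_cases hvS : v ∈ S
        · exact (ha (S1 v hvS i)).elim
        · exact Or.inr (hNeut v hvS hvT i hodd)
    · have hdT : d.fst ∉ T := fun h => ha (T1 d h)
      by_cases hdS : d.fst ∈ S
      swap
      · exact Or.inr (hDneut d hdS hdT hodd)
      by_cases hsT : d.snd ∈ T
      · exact Or.inl ⟨_, Or.inr ⟨d, ⟨hdS, hsT⟩, rfl⟩, rfl⟩
      have hconn : Conn H u (.inr d) (.inr d.symm) :=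
        Conn.of_adj ha (nT d.symm hsT) ((adj_rr _ _).2 rfl)
      by_cases hsS : d.snd ∈ S
      swap
      · right
        rw [cls_eq hconn] at hodd ⊢
        exact hDneut d.symm hsS hsT hodd
      exfalso
      have hcls : cls H u (.inr d) = {.inr d, .inr d.symm} := by
        apply Set.Subset.antisymm
        · apply cls_subset
          · simp
          · rintro _ (rfl | rfl) (⟨w, k⟩ | e) hy hxy
            · rw [adj_rl] at hxy
              simp only at hxy
              subst hxy
              exact (hy (S1 _ hdS k)).elim
            · rw [adj_rr] at hxy
              subst hxy
              simp
            · rw [adj_rl] at hxy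
              simp only at hxy
              subst hxy
              exact (hy (S1 _ hsS k)).elim
            · rw [adj_rr, Dart.symm_symm] at hxy
              subst hxy
              simp
        · rintro _ (rfl | rfl)
          · exact cls_self _ _
          · exact hconn
      rw [hcls, Set.ncard_pair (by simpa using d.symm_ne.symm)] at hodd
      exact absurd hodd (by decide)
  have hfinal : (oddC H u).ncard ≤ ∑ x ∈ T, g x + edgesBetween G ↑S ↑T + lovaszQ G f S T := by
    rw [hQ]
    refine (Set.ncard_le_ncard hcover).trans ((Set.ncard_union_le _ _).trans ?_)
    exact Nat.add_le_add ((Set.ncard_image_le).trans hX) Set.ncard_image_le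
  have := hcond S T hST
  rw [Finset.sum_sub_distrib] at this
  push_cast [← Nat.cast_sum] at this
  omega

end suff

end LovaszAux
/-- Lovász (g,f)-factor theorem: a finite simple graph `G` has a
spanning subgraph `F` with `g(x) ≤ deg_F(x) ≤ f(x)` and
`deg_F(x) ≡ f(x) (mod 2)` for all `x` if and only if for all disjoint
`S, T ⊆ V`, `Σ_{x∈S} f(x) + Σ_{x∈T} (deg_G(x) − g(x)) − ε_G(S,T) − q(S,T) ≥ 0`. -/
theorem lovasz_gf_factor {V : Type*} [Fintype V] [DecidableEq V]
    (G : SimpleGraph V) (f g : V → ℕ)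
    (hgf : ∀ x, g x ≤ f x) (hpar : ∀ x, g x ≡ f x [MOD 2]) :
    (∃ F : SimpleGraph V, F ≤ G ∧
      ∀ x : V, g x ≤ (F.neighborSet x).ncard ∧ (F.neighborSet x).ncard ≤ f x ∧
        (F.neighborSet x).ncard ≡ f x [MOD 2]) ↔
    (∀ S T : Finset V, Disjoint S T →
      (0 : ℤ) ≤ (∑ x ∈ S, (f x : ℤ))
        + (∑ x ∈ T, (((G.neighborSet x).ncard : ℤ) - (g x : ℤ)))
        - (edgesBetween G ↑S ↑T : ℤ) - (lovaszQ G f S T : ℤ)) := by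
 
  constructor
  · rintro ⟨F, hF, hdeg⟩ S T hST
    exact LovaszAux.necessity G f g F hF hdeg S T hST
  · intro hcond
    by_cases hM : ∃ M : (LovaszAux.gadget G f g).Subgraph, M.IsPerfectMatching
    · obtain ⟨M, hM⟩ := hM
      exact LovaszAux.factor_of_matching G f g hpar hgf M hM
    · push Not at hM
      exact (LovaszAux.sufficiency G f g hgf hpar hcond hM).elim
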